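/- Let G = (V,E) be a finite complete undirected graph with a self-loop at every vertex, c : E → ℝ≥0 a cost function satisfying the triangle inequality (including c(vv) ≤ 2·min_{u∈V} c(uv) for loops), and r : V → ℤ≥1. Let TR*_{c,r} denote a minimum-cost feasible Many-Visits tour for requirements r, TR*_{c,1} a minimum-cost tour for requirements 1, and TP*_{c,r-1} a minimum-cost vector z ∈ ℤ^E_{≥0} with d_z(v) = 2(r(v)−1) for all v (the transportation relaxation). Suppose T₁ ∈ ℤ^E_{≥0} is a feasible tour for requirements 1 with c(T₁) ≤ α·c(TR*_{c,1}) for some α ≥ 1. Then the feasible Many-Visits tour T = T₁ + TP*_{c,r-1} satisfies c(T) ≤ (α+1)·c(TR*_{c,r}). -/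

import Mathlib

/- The complete undirected graph with a self-loop at every vertex of the finite vertex
type `V` is modelled by taking the edge set `E` to be all of `Sym2 V`. -/

/-- `d_z(v)`: the sum of the `z`-values on the edges incident to `v`, with the self-loop
at `v` counted twice. -/
def degSum {V : Type*} [Fintype V] [DecidableEq V] (z : Sym2 V → ℤ) (v : V) : ℤ :=
  (∑ u : V, z s(v, u)) + z s(v, v)

/-- `supp(z)` is a connected subgraph spanning all of `V`. -/
def ConnSupp {V : Type*} [Fintype V] [DecidableEq V] (z : Sym2 V → ℤ) : Prop :=
  ∀ A : Finset V, A.Nonempty → A ≠ Finset.univ → ∃ u ∈ A, ∃ w, w ∉ A ∧ z s(u, w) ≠ 0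

/-- `z` is a feasible Many-Visits TSP tour for the requirements `r`. -/
def FeasibleTour {V : Type*} [Fintype V] [DecidableEq V] (z : Sym2 V → ℤ) (r : V → ℤ) :
    Prop :=
  (∀ e, 0 ≤ z e) ∧ (∀ v, degSum z v = 2 * r v) ∧ ConnSupp z

/-- `c(z) = ∑_e c(e) z(e)`: the cost of the multigraph represented by `z`. -/
def tourCost {V : Type*} [Fintype V] [DecidableEq V] (c : Sym2 V → ℝ) (z : Sym2 V → ℤ) :
    ℝ :=
  ∑ e : Sym2 V, c e * (z e : ℝ)

section helpers
variable {V : Type*} [Fintype V] [DecidableEq V]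

def sEdge (a b : V) : Sym2 V → ℤ := fun x => if x = s(a, b) then 1 else 0

def cutV (z : Sym2 V → ℤ) (A : Finset V) : ℤ :=
  ∑ u, ∑ w, if u ∈ A ∧ w ∉ A then z s(u, w) else 0

lemma degSum_add (y z : Sym2 V → ℤ) (t : V) : degSum (y + z) t = degSum y t + degSum z t := by
  simp only [degSum, Pi.add_apply, Finset.sum_add_distrib]; ring

lemma degSum_sub (y z : Sym2 V → ℤ) (t : V) : degSum (y - z) t = degSum y t - degSum z t := by
  simp only [degSum, Pi.sub_apply, Finset.sum_sub_distrib]; ring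

lemma cost_add (c : Sym2 V → ℝ) (y z : Sym2 V → ℤ) :
    tourCost c (y + z) = tourCost c y + tourCost c z := by
  simp only [tourCost, Pi.add_apply, ← Finset.sum_add_distrib]
  apply Finset.sum_congr rfl; intros; push_cast; ring

lemma cost_sub (c : Sym2 V → ℝ) (y z : Sym2 V → ℤ) :
    tourCost c (y - z) = tourCost c y - tourCost c z := by
  simp only [tourCost, Pi.sub_apply, ← Finset.sum_sub_distrib]
  apply Finset.sum_congr rfl; intros; push_cast; ring

lemma cutV_add (y z : Sym2 V → ℤ) (A : Finset V) : cutV (y + z) A = cutV y A + cutV z A := by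
  simp only [cutV, Pi.add_apply, ← Finset.sum_add_distrib]
  apply Finset.sum_congr rfl; intros
  apply Finset.sum_congr rfl; intros; split_ifs <;> simp

lemma cutV_sub (y z : Sym2 V → ℤ) (A : Finset V) : cutV (y - z) A = cutV y A - cutV z A := by
  simp only [cutV, Pi.sub_apply, ← Finset.sum_sub_distrib]
  apply Finset.sum_congr rfl; intros
  apply Finset.sum_congr rfl; intros; split_ifs <;> simp

lemma cost_sEdge (c : Sym2 V → ℝ) (a b : V) : tourCost c (sEdge a b) = c s(a, b) := by
  simp [tourCost, sEdge]

lemma degSum_sEdge (a b t : V) :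
    degSum (sEdge a b) t = (if t = a then 1 else 0) + (if t = b then 1 else 0) := by
  unfold degSum sEdge
  by_cases ha : t = a
  · subst ha
    have : ∀ u, (s(t, u) = s(t, b)) ↔ u = b := fun u => Sym2.congr_right
    simp [this]
  · by_cases hb : t = b
    · subst hb
      have : ∀ u, (s(t, u) = s(a, t)) ↔ u = a := by
        intro u; rw [Sym2.eq_swap (a := a)]; exact Sym2.congr_right
      simp [this, ha]
    · have : ∀ u, ¬ (s(t, u) = s(a, b)) := by intro u; simp [ha, hb]
      simp [this, ha, hb]

lemma cutV_sEdge (a b : V) (A : Finset V) :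
    cutV (sEdge a b) A =
      (if a ∈ A ∧ b ∉ A then 1 else 0) + (if b ∈ A ∧ a ∉ A then 1 else 0) := by
  have key : ∀ u w : V, (if u ∈ A ∧ w ∉ A then sEdge a b s(u, w) else 0)
      = (if u = a then (if w = b then (if a ∈ A ∧ b ∉ A then (1:ℤ) else 0) else 0) else 0)
      + (if u = b then (if w = a then (if b ∈ A ∧ a ∉ A then (1:ℤ) else 0) else 0) else 0) := by
    intro u w
    simp only [sEdge, Sym2.eq_iff]
    grind
  simp only [cutV, key, Finset.sum_add_distrib]
  simp

lemma cutV_pos_iff (z : Sym2 V → ℤ) (hz : ∀ e, 0 ≤ z e) (A : Finset V) :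
    0 < cutV z A ↔ ∃ u ∈ A, ∃ w, w ∉ A ∧ z s(u, w) ≠ 0 := by
  have h1 : ∀ u w : V, 0 ≤ (if u ∈ A ∧ w ∉ A then z s(u, w) else 0) := by
    intro u w; split_ifs; exacts [hz _, le_rfl]
  constructor
  · intro h
    by_contra! hn
    have : cutV z A = 0 := by
      apply Finset.sum_eq_zero; intro u _
      apply Finset.sum_eq_zero; intro w _
      split_ifs with hh
      · exact hn u hh.1 w hh.2
      · rfl
    omega
  · rintro ⟨u, hu, w, hw, h⟩
    apply Finset.sum_pos' (fun u _ => Finset.sum_nonneg fun w _ => h1 u w)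
    refine ⟨u, Finset.mem_univ _, ?_⟩
    apply Finset.sum_pos' (fun w _ => h1 u w)
    refine ⟨w, Finset.mem_univ _, ?_⟩
    rw [if_pos ⟨hu, hw⟩]
    exact lt_of_le_of_ne (hz _) (Ne.symm h)

lemma cutV_compl (z : Sym2 V → ℤ) (A : Finset V) : cutV z Aᶜ = cutV z A := by
  unfold cutV
  rw [Finset.sum_comm]
  apply Finset.sum_congr rfl; intro u _
  apply Finset.sum_congr rfl; intro w _
  rw [Sym2.eq_swap]
  simp [and_comm]

lemma even_inner (z : Sym2 V → ℤ) (A : Finset V) :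
    Even (∑ u ∈ A, ∑ w ∈ A, z s(u, w) + ∑ u ∈ A, z s(u, u)) := by
  induction A using Finset.induction_on with
  | empty => simp
  | insert a A ha ih =>
    simp only [Finset.sum_insert ha, Finset.sum_add_distrib]
    have : ∑ u ∈ A, z s(u, a) = ∑ u ∈ A, z s(a, u) :=
      Finset.sum_congr rfl fun u _ => by rw [Sym2.eq_swap]
    rw [this]
    obtain ⟨k, hk⟩ := ih
    refine ⟨k + z s(a, a) + ∑ u ∈ A, z s(a, u), ?_⟩
    linarith

lemma cutV_even (z : Sym2 V → ℤ) (r : V → ℤ) (hd : ∀ v, degSum z v = 2 * r v) (A : Finset V) :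
    Even (cutV z A) := by
  have h1 : ∑ u ∈ A, degSum z u
      = (∑ u ∈ A, ∑ w ∈ A, z s(u, w) + ∑ u ∈ A, z s(u, u)) + cutV z A := by
    have h2 : cutV z A = ∑ u ∈ A, ∑ w ∈ Aᶜ, z s(u, w) := by
      unfold cutV
      rw [← Finset.sum_subset (Finset.subset_univ A)]
      · apply Finset.sum_congr rfl; intro u hu
        rw [← Finset.sum_subset (Finset.subset_univ Aᶜ)]
        · apply Finset.sum_congr rfl; intro w hw
          rw [if_pos ⟨hu, by simpa using hw⟩]
        · intro w _ hw
          rw [if_neg]; simp at hw; simp [hw]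
      · intro u _ hu
        simp [hu]
    have h3 : ∀ u, degSum z u = (∑ w ∈ A, z s(u, w) + ∑ w ∈ Aᶜ, z s(u, w)) + z s(u, u) := by
      intro u; rw [Finset.sum_add_sum_compl]; rfl
    simp only [h3, Finset.sum_add_distrib, h2]; ring
  have h4 : Even (∑ u ∈ A, degSum z u) := by
    simp only [hd, ← Finset.mul_sum]; exact even_two_mul _
  rw [h1] at h4
  exact (Int.even_add.1 h4).1 (even_inner z A)

lemma cutV_submod (z : Sym2 V → ℤ) (hz : ∀ e, 0 ≤ z e) (A B : Finset V) :
    cutV z (A ∩ B) + cutV z (A ∪ B) ≤ cutV z A + cutV z B := by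
  simp only [cutV, ← Finset.sum_add_distrib]
  apply Finset.sum_le_sum; intro u _
  apply Finset.sum_le_sum; intro w _
  have := hz s(u, w)
  simp only [Finset.mem_inter, Finset.mem_union]
  by_cases h1 : u ∈ A <;> by_cases h2 : u ∈ B <;> by_cases h3 : w ∈ A <;> by_cases h4 : w ∈ B <;>
    simp [h1, h2, h3, h4, this]

lemma cutV_ge (z : Sym2 V → ℤ) (hz : ∀ e, 0 ≤ z e) (A : Finset V) (v : V) (hv : v ∉ A) :
    ∑ u ∈ A, z s(v, u) ≤ cutV z A := by
  unfold cutV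
  rw [← Finset.sum_filter_add_sum_filter_not Finset.univ (· ∈ A)]
  have h0 : ∀ u w : V, 0 ≤ (if u ∈ A ∧ w ∉ A then z s(u, w) else 0) := by
    intro u w; split_ifs; exacts [hz _, le_rfl]
  have h1 : 0 ≤ ∑ u with u ∉ A, ∑ w, (if u ∈ A ∧ w ∉ A then z s(u, w) else 0) :=
    Finset.sum_nonneg fun u _ => Finset.sum_nonneg fun w _ => h0 u w
  have h2 : ∑ u ∈ A, z s(v, u) ≤ ∑ u with u ∈ A, ∑ w, (if u ∈ A ∧ w ∉ A then z s(u, w) else 0) := by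
    rw [Finset.filter_mem_eq_inter, Finset.univ_inter]
    apply Finset.sum_le_sum; intro u hu
    refine le_trans ?_ (Finset.single_le_sum (fun w _ => h0 u w) (Finset.mem_univ v))
    rw [if_pos ⟨hu, hv⟩, Sym2.eq_swap]
  omega

lemma exists_pos (f : V → ℤ) (S : Finset V) (h : 0 < ∑ u ∈ S, f u) : ∃ u ∈ S, 1 ≤ f u := by
  by_contra! hn
  have : ∑ u ∈ S, f u ≤ 0 := Finset.sum_nonpos fun u hu => by have := hn u hu; omega
  omega

/-- the shortcut -/
def scut (z : Sym2 V → ℤ) (v u w : V) : Sym2 V → ℤ := z - sEdge v u - sEdge v w + sEdge u w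

lemma scut_nonneg (z : Sym2 V → ℤ) (hz : ∀ e, 0 ≤ z e) (v u w : V) (hu : 1 ≤ z s(v, u))
    (hw : 1 ≤ z s(v, w) - (if w = u then 1 else 0)) (e : Sym2 V) : 0 ≤ scut z v u w e := by
  have h0 := hz e
  simp only [scut, Pi.add_apply, Pi.sub_apply, sEdge]
  by_cases h1 : e = s(v, u) <;> by_cases h2 : e = s(v, w)
  · have : w = u := by
      rw [h1] at h2; exact (Sym2.congr_right.1 h2).symm
    subst this
    simp only [if_true] at hw
    subst h1
    split_ifs <;> omega
  · subst h1
    split_ifs <;> omega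
  · subst h2
    split_ifs at hw ⊢ <;> omega
  · split_ifs <;> omega

lemma scut_deg (z : Sym2 V → ℤ) (v u w t : V) :
    degSum (scut z v u w) t = degSum z t - 2 * (if t = v then 1 else 0) := by
  simp only [scut, degSum_add, degSum_sub, degSum_sEdge]; ring

lemma scut_cost (c : Sym2 V → ℝ) (htri : ∀ u v w : V, c s(u, w) ≤ c s(u, v) + c s(v, w))
    (z : Sym2 V → ℤ) (v u w : V) : tourCost c (scut z v u w) ≤ tourCost c z := by
  simp only [scut, cost_add, cost_sub, cost_sEdge]
  have := htri u v w
  rw [Sym2.eq_swap (a := u) (b := v)] at this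
  linarith

lemma loop_nonneg (z : Sym2 V → ℤ) (hz : ∀ e, 0 ≤ z e) (v : V) (h : 1 ≤ z s(v, v))
    (e : Sym2 V) : 0 ≤ (z - sEdge v v) e := by
  have h0 := hz e
  simp only [Pi.sub_apply, sEdge]
  split_ifs with h1
  · subst h1; omega
  · omega

lemma loop_deg (z : Sym2 V → ℤ) (v t : V) :
    degSum (z - sEdge v v) t = degSum z t - 2 * (if t = v then 1 else 0) := by
  simp only [degSum_sub, degSum_sEdge]; ring

lemma loop_cost (c : Sym2 V → ℝ) (hc0 : ∀ e, 0 ≤ c e) (z : Sym2 V → ℤ) (v : V) :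
    tourCost c (z - sEdge v v) ≤ tourCost c z := by
  simp only [cost_sub, cost_sEdge]
  linarith [hc0 s(v, v)]

lemma stepA (c : Sym2 V → ℝ) (hc0 : ∀ e, 0 ≤ c e)
    (htri : ∀ u v w : V, c s(u, w) ≤ c s(u, v) + c s(v, w))
    (z : Sym2 V → ℤ) (hz : ∀ e, 0 ≤ z e) (v : V) (hd : 2 ≤ degSum z v) :
    ∃ y : Sym2 V → ℤ, (∀ e, 0 ≤ y e) ∧
      (∀ t, degSum y t = degSum z t - 2 * (if t = v then 1 else 0)) ∧
      tourCost c y ≤ tourCost c z := by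
  by_cases hl : 1 ≤ z s(v, v)
  · exact ⟨_, loop_nonneg z hz v hl, loop_deg z v, loop_cost c hc0 z v⟩
  have hs : 2 ≤ ∑ u, z s(v, u) := by unfold degSum at hd; omega
  obtain ⟨u, -, hu⟩ := exists_pos (fun u => z s(v, u)) Finset.univ (by omega)
  obtain ⟨w, -, hw⟩ := exists_pos (fun w => z s(v, w) - (if w = u then 1 else 0)) Finset.univ (by
    simp only [Finset.sum_sub_distrib]; simp; omega)
  exact ⟨_, scut_nonneg z hz v u w hu hw, scut_deg z v u w, scut_cost c htri z v u w⟩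

lemma cutA (z : Sym2 V → ℤ) (r : V → ℤ) (hf : FeasibleTour z r) (A : Finset V)
    (h1 : A.Nonempty) (h2 : A ≠ Finset.univ) : 2 ≤ cutV z A := by
  have := (cutV_pos_iff z hf.1 A).2 (hf.2.2 A h1 h2)
  obtain ⟨k, hk⟩ := cutV_even z r hf.2.1 A
  omega

lemma choose_pair (z : Sym2 V → ℤ) (r : V → ℤ) (hf : FeasibleTour z r) (v : V)
    (hl : z s(v, v) = 0) (hs : 4 ≤ ∑ u, z s(v, u)) :
    ∃ u w, 1 ≤ z s(v, u) ∧ 1 ≤ z s(v, w) - (if w = u then 1 else 0) ∧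
      ∀ A : Finset V, v ∉ A → u ∈ A → w ∈ A → 3 ≤ cutV z A := by
  obtain ⟨u, -, hu⟩ := exists_pos (fun u => z s(v, u)) Finset.univ (by omega)
  by_contra! hn
  have hn := fun w => hn u w hu
  obtain ⟨w, -, hw⟩ := exists_pos (fun w => z s(v, w) - (if w = u then 1 else 0)) Finset.univ (by
    simp only [Finset.sum_sub_distrib]; simp; omega)
  obtain ⟨A, hvA, huA, hwA, hA⟩ := hn w hw
  have hA1 := cutV_ge z hf.1 A v hvA
  have hA2 : 2 ≤ ∑ a ∈ A, z s(v, a) := by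
    have e1 : ∑ a ∈ A, ((if a = u then 1 else 0) + (if a = w then 1 else 0)) ≤ ∑ a ∈ A, z s(v, a) := by
      apply Finset.sum_le_sum
      intro a _
      have := hf.1 s(v, a)
      by_cases h1 : a = u
      · subst h1
        by_cases h2 : a = w
        · subst h2; simp at hw ⊢; omega
        · simp [h2]; omega
      · by_cases h2 : a = w
        · subst h2; simp [h1] at hw ⊢; omega
        · simp [h1, h2]; omega
    simp [Finset.sum_add_distrib, huA, hwA] at e1
    exact e1
  have hsplit := Finset.sum_add_sum_compl A (fun a => z s(v, a))
  obtain ⟨x, hxA, hx⟩ := exists_pos (fun u => z s(v, u)) Aᶜ (by omega)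
  have hxA : x ∉ A := by simpa using hxA
  have hxu : x ≠ u := by rintro rfl; exact hxA huA
  obtain ⟨B, hvB, huB, hxB, hB⟩ := hn x (by simpa [hxu] using hx)
  have hsub := cutV_submod z hf.1 A B
  have hU := cutV_ge z hf.1 (A ∪ B) v (by simp [hvA, hvB])
  have hU2 : ∑ a ∈ insert x A, z s(v, a) ≤ ∑ a ∈ A ∪ B, z s(v, a) := by
    apply Finset.sum_le_sum_of_subset_of_nonneg
    · intro a ha
      rcases Finset.mem_insert.1 ha with rfl | ha
      · simp [hxB]
      · simp [ha]
    · intros; exact hf.1 _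
  rw [Finset.sum_insert hxA] at hU2
  have hI := cutA z r hf (A ∩ B) ⟨u, by simp [huA, huB]⟩ (by
    intro h; have := Finset.mem_univ v; rw [← h] at this; simp [hvA] at this)
  omega

lemma connSupp_of (z y : Sym2 V → ℤ) (v : V) (hy : ∀ e, 0 ≤ y e)
    (h : ∀ A : Finset V, A.Nonempty → A ≠ Finset.univ → v ∉ A → 0 < cutV y A) : ConnSupp y := by
  intro A h1 h2
  rw [← cutV_pos_iff y hy]
  by_cases hv : v ∈ A
  · rw [← cutV_compl]
    apply h
    · rw [Finset.nonempty_iff_ne_empty]; simpa [Finset.compl_eq_empty_iff] using h2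
    · intro h3; have := Finset.mem_univ v; rw [← h3] at this; simp [hv] at this
    · simpa using hv
  · exact h A h1 h2 hv

lemma stepB (c : Sym2 V → ℝ) (hc0 : ∀ e, 0 ≤ c e)
    (htri : ∀ u v w : V, c s(u, w) ≤ c s(u, v) + c s(v, w))
    (z : Sym2 V → ℤ) (r : V → ℤ) (hf : FeasibleTour z r) (v : V) (hv : 2 ≤ r v) :
    ∃ y : Sym2 V → ℤ, FeasibleTour y (fun t => r t - (if t = v then 1 else 0)) ∧
      tourCost c y ≤ tourCost c z := by
  have hd := hf.2.1
  by_cases hl : 1 ≤ z s(v, v)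
  · refine ⟨z - sEdge v v, ⟨loop_nonneg z hf.1 v hl, ?_, ?_⟩, loop_cost c hc0 z v⟩
    · intro t; rw [loop_deg, hd]; ring
    · apply connSupp_of z _ v (loop_nonneg z hf.1 v hl)
      intro A h1 h2 h3
      have := cutA z r hf A h1 h2
      rw [cutV_sub, cutV_sEdge]
      simp [h3]; omega
  have hl0 : z s(v, v) = 0 := by have := hf.1 s(v, v); omega
  have hs : 4 ≤ ∑ u, z s(v, u) := by have := hd v; unfold degSum at this; omega
  obtain ⟨u, w, hu, hw, hP⟩ := choose_pair z r hf v hl0 hs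
  have hnn := scut_nonneg z hf.1 v u w hu hw
  refine ⟨scut z v u w, ⟨hnn, ?_, ?_⟩, scut_cost c htri z v u w⟩
  · intro t; rw [scut_deg, hd]; ring
  · apply connSupp_of z _ v hnn
    intro A h1 h2 h3
    have := cutA z r hf A h1 h2
    have hP := hP A h3
    simp only [scut, cutV_add, cutV_sub, cutV_sEdge]
    by_cases h4 : u ∈ A <;> by_cases h5 : w ∈ A <;> simp [h3, h4, h5] at hP ⊢ <;> omega

lemma boundA (c : Sym2 V → ℝ) (hc0 : ∀ e, 0 ≤ c e)
    (htri : ∀ u v w : V, c s(u, w) ≤ c s(u, v) + c s(v, w))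
    (r : V → ℤ) (hr : ∀ v, 1 ≤ r v)
    (z : Sym2 V → ℤ) (hz : ∀ e, 0 ≤ z e) (hd : ∀ v, degSum z v = 2 * r v) (S : Finset V) :
    ∃ y : Sym2 V → ℤ, (∀ e, 0 ≤ y e) ∧
      (∀ t, degSum y t = 2 * (r t - (if t ∈ S then 1 else 0))) ∧
      tourCost c y ≤ tourCost c z := by
  induction S using Finset.induction_on with
  | empty => exact ⟨z, hz, by simpa using hd, le_rfl⟩
  | insert a S ha ih =>
    obtain ⟨y, h1, h2, h3⟩ := ih
    obtain ⟨x, g1, g2, g3⟩ := stepA c hc0 htri y h1 a (by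
      rw [h2, if_neg ha]; have := hr a; omega)
    refine ⟨x, g1, ?_, g3.trans h3⟩
    intro t
    rw [g2, h2]
    by_cases h : t = a
    · subst h; simp [ha]; ring
    · simp [h]

lemma boundB (c : Sym2 V → ℝ) (hc0 : ∀ e, 0 ≤ c e)
    (htri : ∀ u v w : V, c s(u, w) ≤ c s(u, v) + c s(v, w)) (n : ℕ) :
    ∀ (r : V → ℤ) (_ : ∀ v, 1 ≤ r v) (_ : ∑ v, (r v - 1) = n)
    (z : Sym2 V → ℤ) (_ : FeasibleTour z r),
    ∃ y : Sym2 V → ℤ, FeasibleTour y (fun _ => 1) ∧ tourCost c y ≤ tourCost c z := by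
  induction n with
  | zero =>
    intro r hr hs z hf
    have : r = fun _ => 1 := by
      funext v
      have := (Finset.sum_eq_zero_iff_of_nonneg (f := fun v => r v - 1)
        (fun v _ => by have := hr v; omega)).1
        (by rw [hs]; rfl) v (Finset.mem_univ v)
      omega
    subst this
    exact ⟨z, hf, le_rfl⟩
  | succ n ih =>
    intro r hr hs z hf
    obtain ⟨v, -, hv⟩ := exists_pos (fun v => r v - 1) Finset.univ (by rw [hs]; positivity)
    obtain ⟨y, h1, h2⟩ := stepB c hc0 htri z r hf v (by omega)
    obtain ⟨x, g1, g2⟩ := ih _ (by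
      intro t; have := hr t
      by_cases h : t = v
      · subst h; simp; omega
      · simp [h]; omega) (by
      have : ∀ t, r t - (if t = v then 1 else 0) - 1 = (r t - 1) - (if t = v then 1 else 0) := by
        intro t; ring
      simp only [this]
      rw [Finset.sum_sub_distrib, hs]; simp) y h1
    exact ⟨x, g1, g2.trans h2⟩

end helpers

/-- Cost guarantee of Theorem 5 (the simple `(α+1)`-approximation): if `Topt` is an optimal
Many-Visits tour for `r`, `Topt1` an optimal tour for requirements `1`, `TP` an optimal
solution of the transportation relaxation with prescriptions `r - 1`, and `T₁` is a feasible
tour for requirements `1` of cost at most `α` times that of `Topt1`, then the feasible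
Many-Visits tour `T₁ + TP` has cost at most `(α + 1)` times that of `Topt`. -/
theorem simple_approximation_cost
    {V : Type*} [Fintype V] [DecidableEq V]
    (c : Sym2 V → ℝ) (hc0 : ∀ e, 0 ≤ c e)
    (htri : ∀ u v w : V, c s(u, w) ≤ c s(u, v) + c s(v, w))
    (r : V → ℤ) (hr : ∀ v, 1 ≤ r v)
    (Topt : Sym2 V → ℤ) (hTopt : FeasibleTour Topt r)
    (hToptMin : ∀ z, FeasibleTour z r → tourCost c Topt ≤ tourCost c z)
    (Topt1 : Sym2 V → ℤ) (hTopt1 : FeasibleTour Topt1 (fun _ => 1))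
    (hTopt1Min : ∀ z, FeasibleTour z (fun _ => 1) → tourCost c Topt1 ≤ tourCost c z)
    (TP : Sym2 V → ℤ) (hTPnn : ∀ e, 0 ≤ TP e)
    (hTPdeg : ∀ v, degSum TP v = 2 * (r v - 1))
    (hTPmin : ∀ z : Sym2 V → ℤ, (∀ e, 0 ≤ z e) → (∀ v, degSum z v = 2 * (r v - 1)) →
      tourCost c TP ≤ tourCost c z)
    (α : ℝ) (hα : 1 ≤ α)
    (T₁ : Sym2 V → ℤ) (hT₁ : FeasibleTour T₁ (fun _ => 1))
    (hT₁cost : tourCost c T₁ ≤ α * tourCost c Topt1) :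
    FeasibleTour (fun e => T₁ e + TP e) r ∧
    tourCost c (fun e => T₁ e + TP e) ≤ (α + 1) * tourCost c Topt := by
  have hsum : (fun e => T₁ e + TP e) = T₁ + TP := rfl
  rw [hsum]
  refine ⟨⟨fun e => add_nonneg (hT₁.1 e) (hTPnn e), ?_, ?_⟩, ?_⟩
  · intro v
    rw [degSum_add, hT₁.2.1, hTPdeg]; ring
  · intro A h1 h2
    obtain ⟨u, hu, w, hw, h⟩ := hT₁.2.2 A h1 h2
    refine ⟨u, hu, w, hw, ?_⟩
    have h3 := hT₁.1 s(u, w)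
    have h4 := hTPnn s(u, w)
    rw [Pi.add_apply]
    omega
  · rw [cost_add]
    obtain ⟨y, a1, a2, a3⟩ := boundA c hc0 htri r hr Topt hTopt.1 hTopt.2.1 Finset.univ
    have hA := (hTPmin y a1 (by simpa using a2)).trans a3
    obtain ⟨x, b1, b2⟩ := boundB c hc0 htri (∑ v, (r v - 1)).toNat r hr
      (Int.toNat_of_nonneg (Finset.sum_nonneg fun v _ => by have := hr v; omega)).symm Topt hTopt
    have hB := (hTopt1Min x b1).trans b2
    have := mul_le_mul_of_nonneg_left hB (by linarith : (0:ℝ) ≤ α)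
    linarith
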